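/- (Group inverse representation of the resistance distance.) Let P be a primitive stochastic matrix on a finite nonempty state space X with stationary distribution π, Π the matrix each of whose rows equals π, F the fundamental matrix, and Ω_{i,j} := F_{i,i} + F_{j,j} − F_{i,j} − F_{j,i}. If D is any matrix satisfying the group-inverse equations (I − P)D(I − P) = I − P, D(I − P)D = D, and (I − P)D = D(I − P), then for all states i, j one has Ω_{i,j} = D_{i,i} + D_{j,j} − D_{i,j} − D_{j,i}. -/

import Mathlib

open Matrix BigOperators Finset

/-!
Write `A = 1 - P`. Since `A Π = 0` and `Π² = Π`, the equation `F (A + Π) = 1` yields `F Π = Π` and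
`F A = 1 - Π`. A group inverse `D` of `A` satisfies `A² D = A`, and multiplying this by `F` on the
left gives `1 - A D = Π (1 - A D)`, hence `F = F A D + F (1 - A D) = D + Π (1 - A D - D)`. The rows
of `Π M` all coincide for every `M`, and adding a matrix with equal rows does not change the
resistance distance.
-/

theorem eq_add_mul_of_mul_add_eq_one {S : Type*} [Ring S] {a d e f : S} (hae : a * e = 0)
    (he : IsIdempotentElem e) (hf : f * (a + e) = 1) (hd : a * a * d = a) :
    f = d + e * (1 - a * d - d) := by
  have hfe : f * e = e := by
    calc f * e = f * ((a + e) * e) := by rw [add_mul, hae, he.eq, zero_add]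
      _ = e := by rw [← mul_assoc, hf, one_mul]
  have hfa : f * a = 1 - e := by
    rw [eq_sub_iff_add_eq, ← hf, mul_add, hfe]
  have hcompl : 1 - a * d = e * (1 - a * d) := by
    have hproj : (1 - e) * (a * d) = 1 - e := by
      rw [← hfa, mul_assoc, ← mul_assoc a, hd]
    rw [← sub_eq_zero, ← one_sub_mul, mul_one_sub, hproj, sub_self]
  calc f = f * a * d + f * (1 - a * d) := by noncomm_ring
    _ = f * a * d + f * (e * (1 - a * d)) := by rw [← hcompl]
    _ = (1 - e) * d + e * (1 - a * d) := by rw [← mul_assoc f, hfe, hfa]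
    _ = d + e * (1 - a * d - d) := by noncomm_ring

section Resistance

variable {X R : Type*}

/-- The resistance distance determined by a square matrix `M`; that of a Markov chain is obtained by
taking for `M` its fundamental matrix. -/
def resistance [AddCommGroup R] (M : Matrix X X R) (i j : X) : R :=
  M i i + M j j - M i j - M j i

theorem resistance_add_replicateRow [AddCommGroup R] (M : Matrix X X R) (v : X → R) :
    resistance (M + replicateRow X v) = resistance M := by
  ext i j
  simp only [resistance, Matrix.add_apply, replicateRow_apply]
  abel

variable [Fintype X]

theorem mul_replicateRow_of_row_sum_eq_one {m n : Type*} [NonAssocSemiring R] {M : Matrix m X R}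
    (hM : ∀ i, ∑ j, M i j = 1) (v : n → R) : M * replicateRow X v = replicateRow m v := by
  ext i j
  simp only [Matrix.mul_apply, replicateRow_apply, ← Finset.sum_mul, hM, one_mul]

variable [DecidableEq X] [Ring R]

theorem stmt_2_general {P F D : Matrix X X R} {π : X → R} (hP : ∀ i, ∑ j, P i j = 1)
    (hπ : ∑ i, π i = 1) (hF : F * (1 - P + replicateRow X π) = 1)
    (hD : (1 - P) * (1 - P) * D = 1 - P) : resistance F = resistance D := by
  have h_idem : IsIdempotentElem (replicateRow X π) :=
    mul_replicateRow_of_row_sum_eq_one (fun _ => hπ) π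
  have h_ann : (1 - P) * replicateRow X π = 0 := by
    rw [sub_mul, one_mul, mul_replicateRow_of_row_sum_eq_one hP, sub_self]
  rw [eq_add_mul_of_mul_add_eq_one h_ann h_idem hF hD, ← replicateRow_vecMul,
    resistance_add_replicateRow]

end Resistance

theorem stmt_2
    {X : Type*} [Fintype X] [Nonempty X] [DecidableEq X]
    (P : Matrix X X ℝ)
    (hP_nonneg : ∀ i j, 0 ≤ P i j)
    (hP_row : ∀ i, ∑ j, P i j = 1)
    (hP_prim : ∃ N : ℕ, 1 ≤ N ∧ ∀ i j, 0 < (P ^ N) i j)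
    (pi : X → ℝ)
    (hpi_pos : ∀ i, 0 < pi i)
    (hpi_sum : ∑ i, pi i = 1)
    (hpi_stat : ∀ j, ∑ i, pi i * P i j = pi j)
    (PiM : Matrix X X ℝ)
    (hPiM : ∀ i j, PiM i j = pi j)
    (F : Matrix X X ℝ)
    (hF1 : F * (1 - P + PiM) = 1)
    (hF2 : (1 - P + PiM) * F = 1)
    (Ω : X → X → ℝ)
    (hΩ : ∀ i j, Ω i j = F i i + F j j - F i j - F j i)
    (D : Matrix X X ℝ)
    (hD1 : (1 - P) * D * (1 - P) = 1 - P)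
    (hD2 : D * (1 - P) * D = D)
    (hD3 : (1 - P) * D = D * (1 - P))
    : ∀ i j, Ω i j = D i i + D j j - D i j - D j i := by
  obtain rfl : PiM = replicateRow X pi := Matrix.ext hPiM
  have hD : (1 - P) * (1 - P) * D = 1 - P := by rw [mul_assoc, hD3, ← mul_assoc, hD1]
  intro i j
  exact (hΩ i j).trans (congrFun₂ (stmt_2_general hP_row hpi_sum hF1 hD) i j)
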